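/- Let R_S be the maximal Sender's ex ante payoff over all obedient and incentive compatible deterministic representations, and let R_U = ∑_{i=0}^{n−1} v_i μ_F(A_i) be the unraveling payoff (the payoff of the deterministic representation {A_i}_{i=0}^{n−1}). Then R_S > R_U. -/

import Mathlib

open MeasureTheory Set

noncomputable section

namespace VerifiableDisclosure

/-- The measure on `[0,1]` induced by a density `f`. -/
def densMeasure (f : ℝ → ℝ) : Measure ℝ :=
  (volume.restrict (Icc (0:ℝ) 1)).withDensity (fun x => ENNReal.ofReal (f x))

/-- `f` is a strictly positive density on `[0,1]` inducing a probability measure. -/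
structure IsPrior (f : ℝ → ℝ) : Prop where
  meas : Measurable f
  pos : ∀ x ∈ Icc (0:ℝ) 1, 0 < f x
  prob : densMeasure f univ = 1

/-- The CDF of a measure on `ℝ`. -/
def mcdf (μ : Measure ℝ) (x : ℝ) : ℝ := (μ (Iic x)).toReal

/-- The support of a measure on `ℝ`: points all of whose neighborhoods have positive mass. -/
def msupport (μ : Measure ℝ) : Set ℝ := {x | ∀ U ∈ nhds x, μ U ≠ 0}

/-- `G` is a distribution on `[0,1]` that is a mean-preserving contraction of `μ`. -/
def IsMPC (μ G : Measure ℝ) : Prop :=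
  IsProbabilityMeasure G ∧ msupport G ⊆ Icc (0:ℝ) 1 ∧
    (∀ x ∈ Icc (0:ℝ) 1, (∫ s in (0:ℝ)..x, mcdf G s) ≤ ∫ s in (0:ℝ)..x, mcdf μ s) ∧
    (∫ s in (0:ℝ)..(1:ℝ), mcdf G s) = ∫ s in (0:ℝ)..(1:ℝ), mcdf μ s

/-- Conditional mean of `μ` on the set `B`. -/
def condMean (μ : Measure ℝ) (B : Set ℝ) : ℝ := (∫ ω in B, ω ∂μ) / (μ B).toReal

/-- `G` is a bi-pooling distribution relative to the prior `μ`. -/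
def IsBiPooling (μ G : Measure ℝ) : Prop :=
  IsMPC μ G ∧
    ∃ (ι : Type) (a b : ι → ℝ),
      (∀ i, (0:ℝ) ≤ a i ∧ a i ≤ b i ∧ b i ≤ 1) ∧
      (Pairwise fun i j => Disjoint (Icc (a i) (b i)) (Icc (a j) (b j))) ∧
      (∀ i, G (Icc (a i) (b i)) = μ (Icc (a i) (b i))) ∧
      (∀ i, (msupport (G.restrict (Icc (a i) (b i)))).encard ≤ 2) ∧
      (∀ s : Set ℝ, MeasurableSet s → s ⊆ Icc (0:ℝ) 1 \ (⋃ i, Icc (a i) (b i)) → G s = μ s)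

/-- `G` is a bi-pooling solution of the information design problem with value function `u`. -/
def IsBiPoolingSolution (μ G : Measure ℝ) (u : ℝ → ℝ) : Prop :=
  IsBiPooling μ G ∧ ∀ G' : Measure ℝ, IsMPC μ G' → (∫ x, u x ∂G') ≤ ∫ x, u x ∂G

/-- A deterministic representation: closed sets covering `[0,1]`, pairwise `μ`-null overlaps. -/
def IsDetRep (μ : Measure ℝ) (n : ℕ) (B : ℕ → Set ℝ) : Prop :=
  (∀ i < n, IsClosed (B i) ∧ B i ⊆ Icc (0:ℝ) 1) ∧
    (⋃ i ∈ Finset.range n, B i) = Icc (0:ℝ) 1 ∧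
    (∀ i < n, ∀ j < n, i ≠ j → μ (B i ∩ B j) = 0)

/-- Incentive compatibility of a deterministic representation. -/
def IsIC (n : ℕ) (γ : ℕ → ℝ) (B : ℕ → Set ℝ) : Prop :=
  ∀ i < n, Icc (γ i) (γ (i+1)) ⊆ ⋃ j ∈ Finset.Ico i n, B j

/-- Obedience of a deterministic representation. -/
def IsObedient (μ : Measure ℝ) (n : ℕ) (γ : ℕ → ℝ) (B : ℕ → Set ℝ) : Prop :=
  ∀ i < n, μ (B i) ≠ 0 → condMean μ (B i) ∈ Icc (γ i) (γ (i+1))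

/-- `B` is a deterministic representation of the distribution `G`:
`G` places mass `μ (B i)` on the conditional mean of `B i`. -/
def IsDetRepOf (μ : Measure ℝ) (n : ℕ) (B : ℕ → Set ℝ) (G : Measure ℝ) : Prop :=
  IsDetRep μ n B ∧
    G = ∑ i ∈ Finset.range n, (μ (B i)) • Measure.dirac (condMean μ (B i))

/-- `{BL, BH}` is a nested intervals pair. -/
def IsNestedPair (BL BH : Set ℝ) : Prop :=
  ∃ w₁ b₁ b₂ w₂ : ℝ, w₁ < b₁ ∧ b₁ ≤ b₂ ∧ b₂ < w₂ ∧
    BL = Icc b₁ b₂ ∧ BH = Icc w₁ b₁ ∪ Icc b₂ w₂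

/-- A canonical representation of `G`: a deterministic representation of `G` in which every
element with nonempty interior is either an interval, or the outer member of a nested
intervals pair whose inner member has a lower index. -/
def IsCanonicalRep (μ : Measure ℝ) (n : ℕ) (B : ℕ → Set ℝ) (G : Measure ℝ) : Prop :=
  IsDetRepOf μ n B G ∧
    ∀ i < n, (interior (B i)).Nonempty →
      (∃ c d : ℝ, B i = Icc c d) ∨ ∃ L < i, IsNestedPair (B L) (B i)

/-- Index `i` is skipped: `B i` has empty interior. -/
def Skipped (B : ℕ → Set ℝ) (i : ℕ) : Prop := interior (B i) = ∅

/-- A skipped index `i` is harmlessly skipped if `A i ⊆ ⋃_{k > i} B k`. -/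
def HarmlesslySkipped (n : ℕ) (γ : ℕ → ℝ) (B : ℕ → Set ℝ) (i : ℕ) : Prop :=
  Icc (γ i) (γ (i+1)) ⊆ ⋃ k ∈ Finset.Ioo i n, B k

/-- Laminar representation property. -/
def IsLaminar (n : ℕ) (B : ℕ → Set ℝ) : Prop :=
  ∀ i < n, B i = closure ((convexHull ℝ (B i)) \ ⋃ j ∈ Finset.range i, convexHull ℝ (B j))

/-- Sender's ex ante payoff of a deterministic representation. -/
def payoff (μ : Measure ℝ) (n : ℕ) (v : ℕ → ℝ) (B : ℕ → Set ℝ) : ℝ :=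
  ∑ i ∈ Finset.range n, v i * (μ (B i)).toReal

/-- Conditional CDF of the prior with density `f` on the interval `[w₁, w₂]`. -/
def condCDF' (f : ℝ → ℝ) (w₁ w₂ x : ℝ) : ℝ :=
  (mcdf (densMeasure f) x - mcdf (densMeasure f) w₁) /
    (mcdf (densMeasure f) w₂ - mcdf (densMeasure f) w₁)

/-- `{zL, zH}` is a feasible bi-pooling support for the interval `[w₁, w₂]`. -/
def FeasibleSupport (f : ℝ → ℝ) (w₁ w₂ zL zH : ℝ) : Prop :=
  ∃ G : Measure ℝ, IsProbabilityMeasure G ∧ msupport G ⊆ {zL, zH} ∧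
    (∀ x ∈ Icc w₁ w₂, (∫ s in w₁..x, mcdf G s) ≤ ∫ s in w₁..x, condCDF' f w₁ w₂ s) ∧
    (∫ s in w₁..w₂, mcdf G s) = ∫ s in w₁..w₂, condCDF' f w₁ w₂ s


lemma real_pos {f : ℝ → ℝ} (hf : IsPrior f) {a b : ℝ} (ha : 0 ≤ a) (hab : a < b) (hb : b ≤ 1) :
    densMeasure f (Icc a b) ≠ 0 := by
  intro h
  unfold densMeasure at h
  rw [withDensity_apply _ measurableSet_Icc, Measure.restrict_restrict measurableSet_Icc,
    inter_eq_left.2 (Icc_subset_Icc ha hb)] at h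
  rw [setLIntegral_eq_zero_iff measurableSet_Icc (hf.meas.ennreal_ofReal)] at h
  have h2 : volume (Icc a b) = 0 := by
    refine measure_mono_null ?_ (ae_iff.1 h)
    intro x hx
    have := hf.pos x ⟨ha.trans hx.1, hx.2.trans hb⟩
    simp only [mem_ofPred_eq, not_forall]
    exact ⟨hx, by simpa using this⟩
  rw [Real.volume_Icc] at h2
  simp at h2
  linarith

lemma noAtoms_dens (f : ℝ → ℝ) : NullSingletonClass (densMeasure f) := by
  unfold densMeasure
  infer_instance

lemma integrableOn_Icc_id (μ : Measure ℝ) [IsProbabilityMeasure μ] (g a b : ℝ) :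
    IntegrableOn (fun ω : ℝ => ω - g) (Icc a b) μ :=
  (by fun_prop : Continuous fun ω : ℝ => ω - g).continuousOn.integrableOn_compact isCompact_Icc

lemma int_sub (μ : Measure ℝ) [IsProbabilityMeasure μ] (g a b : ℝ) :
    ∫ ω in Icc a b, (ω - g) ∂μ = (∫ ω in Icc a b, ω ∂μ) - g * (μ (Icc a b)).toReal := by
  rw [integral_sub]
  · simp [Measure.real, mul_comm]
  · simpa [IntegrableOn] using integrableOn_Icc_id μ 0 a b
  · exact integrable_const _

lemma condMean_ge (μ : Measure ℝ) [IsProbabilityMeasure μ] {g a b : ℝ}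
    (h0 : μ (Icc a b) ≠ 0) (h : 0 ≤ ∫ ω in Icc a b, (ω - g) ∂μ) : g ≤ condMean μ (Icc a b) := by
  rw [int_sub] at h
  unfold condMean
  rw [le_div_iff₀ (ENNReal.toReal_pos h0 (measure_ne_top _ _))]
  linarith

lemma condMean_le (μ : Measure ℝ) [IsProbabilityMeasure μ] {g a b : ℝ}
    (h0 : μ (Icc a b) ≠ 0) (h : ∫ ω in Icc a b, (ω - g) ∂μ ≤ 0) : condMean μ (Icc a b) ≤ g := by
  rw [int_sub] at h
  unfold condMean
  rw [div_le_iff₀ (ENNReal.toReal_pos h0 (measure_ne_top _ _))]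
  linarith

lemma condMean_mem (μ : Measure ℝ) [IsProbabilityMeasure μ] {a b : ℝ}
    (h0 : μ (Icc a b) ≠ 0) : condMean μ (Icc a b) ∈ Icc a b :=
  ⟨condMean_ge μ h0 (setIntegral_nonneg measurableSet_Icc fun x hx => by linarith [hx.1]),
   condMean_le μ h0 (setIntegral_nonpos measurableSet_Icc fun x hx => by linarith [hx.2])⟩

lemma ae_disj (μ : Measure ℝ) [NullSingletonClass μ] (a c b : ℝ) :
    AEDisjoint μ (Icc a c) (Icc c b) := by
  refine measure_mono_null (t := {c}) ?_ (measure_singleton c)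
  rintro x ⟨h1, h2⟩
  exact le_antisymm h1.2 h2.1

lemma meas_split (μ : Measure ℝ) [IsProbabilityMeasure μ] [NullSingletonClass μ] {a c b : ℝ}
    (h1 : a ≤ c) (h2 : c ≤ b) :
    (μ (Icc a b)).toReal = (μ (Icc a c)).toReal + (μ (Icc c b)).toReal := by
  rw [← Icc_union_Icc_eq_Icc h1 h2,
    measure_union₀ measurableSet_Icc.nullMeasurableSet (ae_disj μ a c b),
    ENNReal.toReal_add (measure_ne_top _ _) (measure_ne_top _ _)]

lemma int_split (μ : Measure ℝ) [IsProbabilityMeasure μ] [NullSingletonClass μ] {a c b : ℝ} (g : ℝ)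
    (h1 : a ≤ c) (h2 : c ≤ b) :
    ∫ ω in Icc a b, (ω - g) ∂μ
      = (∫ ω in Icc a c, (ω - g) ∂μ) + ∫ ω in Icc c b, (ω - g) ∂μ := by
  rw [← Icc_union_Icc_eq_Icc h1 h2]
  exact integral_union_ae (ae_disj μ a c b) measurableSet_Icc.nullMeasurableSet
    (integrableOn_Icc_id μ g a c) (integrableOn_Icc_id μ g c b)

lemma mono_steps {n : ℕ} {γ : ℕ → ℝ} (h : ∀ i < n, γ i < γ (i+1)) :
    ∀ j ≤ n, ∀ i ≤ j, γ i ≤ γ j := by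
  intro j
  induction j with
  | zero => intro _ i hi; rw [Nat.le_zero.1 hi]
  | succ k ih =>
    intro hk i hi
    rcases Nat.le_succ_iff.1 hi with h1 | h1
    · exact (ih (by omega) i h1).trans (h k (by omega)).le
    · rw [h1]

lemma cover_steps {n : ℕ} {γ : ℕ → ℝ} (h : ∀ i < n, γ i < γ (i+1)) :
    ∀ k, k < n → (⋃ i ∈ Finset.range (k+1), Icc (γ i) (γ (i+1))) = Icc (γ 0) (γ (k+1)) := by
  intro k
  induction k with
  | zero => intro _; simp
  | succ k ih =>
    intro hk
    rw [Finset.range_add_one, Finset.set_biUnion_insert, ih (by omega), union_comm]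
    exact Icc_union_Icc_eq_Icc (mono_steps h _ (by omega) _ (by omega)) (h _ hk).le

lemma detRep_steps (μ : Measure ℝ) [NullSingletonClass μ] {n : ℕ} (hn : 0 < n) {γ : ℕ → ℝ}
    (h : ∀ i < n, γ i < γ (i+1)) (h0 : γ 0 = 0) (h1 : γ n = 1) :
    IsDetRep μ n (fun i => Icc (γ i) (γ (i+1))) := by
  have key : ∀ i < n, ∀ j < n, i < j → μ (Icc (γ i) (γ (i+1)) ∩ Icc (γ j) (γ (j+1))) = 0 := by
    intro i _ j hj hij
    refine measure_mono_null (t := {γ (i+1)}) ?_ (measure_singleton _)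
    rintro x ⟨hx, hy⟩
    exact le_antisymm hx.2 ((mono_steps h j hj.le (i+1) hij).trans hy.1)
  refine ⟨fun i hi => ⟨isClosed_Icc, Icc_subset_Icc ?_ ?_⟩, ?_, ?_⟩
  · rw [← h0]; exact mono_steps h _ hi.le _ (by omega)
  · rw [← h1]; exact mono_steps h _ le_rfl _ (by omega)
  · obtain ⟨k, rfl⟩ : ∃ k, n = k + 1 := ⟨n - 1, by omega⟩
    rw [cover_steps h k (by omega), h0, h1]
  · intro i hi j hj hij
    rcases lt_or_gt_of_ne hij with h2 | h2
    · exact key i hi j hj h2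
    · rw [inter_comm]; exact key j hj i hi h2

/-- the maximal Sender payoff strictly exceeds the unraveling payoff. -/
theorem optimal_payoff_gt_unraveling
    (f : ℝ → ℝ) (hf : IsPrior f)
    (n : ℕ) (hn : 2 ≤ n)
    (γ : ℕ → ℝ) (hγ0 : γ 0 = 0) (hγn : γ n = 1)
    (hγ : ∀ i < n, γ i < γ (i+1))
    (v : ℕ → ℝ) (hv0 : v 0 = 0) (hv : ∀ i, i + 1 < n → v i < v (i+1))
    (B : ℕ → Set ℝ)
    (hdet : IsDetRep (densMeasure f) n B)
    (hob : IsObedient (densMeasure f) n γ B)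
    (hic : IsIC n γ B)
    (hmax : ∀ B' : ℕ → Set ℝ, IsDetRep (densMeasure f) n B' →
      IsObedient (densMeasure f) n γ B' → IsIC n γ B' →
      payoff (densMeasure f) n v B' ≤ payoff (densMeasure f) n v B) :
    payoff (densMeasure f) n v (fun i => Icc (γ i) (γ (i+1))) <
      payoff (densMeasure f) n v B := by
  obtain ⟨m, rfl⟩ : ∃ m, n = m + 2 := ⟨n - 2, by omega⟩
  have : IsProbabilityMeasure (densMeasure f) := ⟨hf.prob⟩
  have := noAtoms_dens f
  have hm0 : 0 ≤ γ m := by rw [← hγ0]; exact mono_steps hγ _ (by omega) _ (by omega)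
  have hmg : γ m < γ (m+1) := hγ m (by omega)
  have hg1 : γ (m+1) < 1 := by rw [← hγn]; exact hγ (m+1) (by omega)
  have hpos : ∀ a b : ℝ, 0 ≤ a → a < b → b ≤ 1 → densMeasure f (Icc a b) ≠ 0 :=
    fun a b h1 h2 h3 => real_pos hf h1 h2 h3
  generalize densMeasure f = μ at *
  obtain ⟨g, hg⟩ : ∃ g, g = γ (m+1) := ⟨_, rfl⟩
  rw [← hg] at hmg hg1
  have hK : 0 < ∫ ω in Icc g 1, (ω - g) ∂μ := by
    rw [int_split μ g (c := (g+1)/2) (by linarith) (by linarith)]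
    have h1 : 0 ≤ ∫ ω in Icc g ((g+1)/2), (ω - g) ∂μ :=
      setIntegral_nonneg measurableSet_Icc fun x hx => by linarith [hx.1]
    have h2 : (1-g)/2 * (μ (Icc ((g+1)/2) 1)).toReal ≤ ∫ ω in Icc ((g+1)/2) 1, (ω - g) ∂μ :=
      setIntegral_ge_of_const_le_real measurableSet_Icc (measure_ne_top _ _)
        (fun x hx => by linarith [hx.1]) (integrableOn_Icc_id μ g _ _)
    have h3 := ENNReal.toReal_pos (hpos ((g+1)/2) 1 (by linarith) (by linarith) le_rfl)
      (measure_ne_top _ _)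
    have h4 : 0 < (1-g)/2 * (μ (Icc ((g+1)/2) 1)).toReal := mul_pos (by linarith) h3
    linarith
  obtain ⟨c, hmc, hcg, hcK⟩ : ∃ c, γ m < c ∧ c < g ∧ g - c ≤ ∫ ω in Icc g 1, (ω - g) ∂μ := by
    refine ⟨g - min (∫ ω in Icc g 1, (ω - g) ∂μ) ((g - γ m)/2), ?_, ?_, ?_⟩
    · linarith [min_le_right (∫ ω in Icc g 1, (ω - g) ∂μ) ((g - γ m)/2)]
    · have : 0 < min (∫ ω in Icc g 1, (ω - g) ∂μ) ((g - γ m)/2) :=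
        lt_min hK (by linarith)
      linarith
    · linarith [min_le_left (∫ ω in Icc g 1, (ω - g) ∂μ) ((g - γ m)/2)]
  have hmean : 0 ≤ ∫ ω in Icc c 1, (ω - g) ∂μ := by
    rw [int_split μ g hcg.le hg1.le]
    have h2 : (c - g) * (μ (Icc c g)).toReal ≤ ∫ ω in Icc c g, (ω - g) ∂μ :=
      setIntegral_ge_of_const_le_real measurableSet_Icc (measure_ne_top _ _)
        (fun x hx => by linarith [hx.1]) (integrableOn_Icc_id μ g _ _)
    have h3 : (μ (Icc c g)).toReal ≤ 1 := ENNReal.toReal_le_of_le_ofReal zero_le_one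
      (by simpa using prob_le_one)
    nlinarith
  set δ : ℕ → ℝ := Function.update γ (m+1) c with hδ
  have δ1 : δ (m+1) = c := by simp [hδ]
  have δne : ∀ i, i ≠ m+1 → δ i = γ i := fun i hi => by simp [hδ, hi]
  have δm : δ m = γ m := δne m (by omega)
  have δ2 : δ (m+2) = 1 := by rw [δne _ (by omega), hγn]
  have hstep : ∀ i < m+2, δ i < δ (i+1) := by
    intro i hi
    rcases lt_trichotomy i m with h | h | h
    · rw [δne i (by omega), δne (i+1) (by omega)]; exact hγ i hi
    · subst h; rw [δm, δ1]; exact hmc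
    · obtain rfl : i = m+1 := by omega
      rw [δ1, δ2]; linarith
  have hpay := hmax (fun i => Icc (δ i) (δ (i+1)))
    (detRep_steps μ (by omega) hstep (by rw [δne 0 (by omega), hγ0]) δ2) ?_ ?_
  · refine lt_of_lt_of_le ?_ hpay
    unfold payoff
    rw [Finset.sum_range_succ, Finset.sum_range_succ, Finset.sum_range_succ _ (m+1),
      Finset.sum_range_succ _ m]
    have e : ∑ i ∈ Finset.range m, v i * (μ (Icc (γ i) (γ (i+1)))).toReal
        = ∑ i ∈ Finset.range m, v i * (μ (Icc (δ i) (δ (i+1)))).toReal := by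
      refine Finset.sum_congr rfl fun i hi => ?_
      have := Finset.mem_range.1 hi
      rw [δne i (by omega), δne (i+1) (by omega)]
    simp only [e, δm, δ1, ← hg, show m + 1 + 1 = m + 2 from rfl, δ2, hγn]
    rw [meas_split μ hmc.le hcg.le, meas_split μ hcg.le hg1.le]
    have h3 := ENNReal.toReal_pos (hpos c g (by linarith) hcg hg1.le) (measure_ne_top _ _)
    have h4 := hv m (by omega)
    nlinarith
  · intro i hi h0
    have hmem := condMean_mem μ h0
    rcases lt_trichotomy i m with h | h | h
    · simpa [δne i (by omega), δne (i+1) (by omega)] using hmem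
    · subst h
      simp only [δm, δ1] at hmem ⊢
      exact ⟨hmem.1, hmem.2.trans (by rw [← hg]; exact hcg.le)⟩
    · obtain rfl : i = m+1 := by omega
      simp only [δ1, ← hg, show m + 1 + 1 = m + 2 from rfl, δ2, hγn] at hmem h0 ⊢
      exact ⟨condMean_ge μ h0 hmean, hmem.2⟩
  · intro i hi x hx
    simp only [mem_iUnion, Finset.mem_Ico, exists_prop]
    rcases lt_trichotomy i m with h | h | h
    · exact ⟨i, ⟨le_rfl, hi⟩, by rwa [δne i (by omega), δne (i+1) (by omega)]⟩
    · subst h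
      rcases le_total x c with hc | hc
      · exact ⟨i, ⟨le_rfl, hi⟩, by rw [δm, δ1]; exact ⟨hx.1, hc⟩⟩
      · refine ⟨i+1, ⟨by omega, by omega⟩, ?_⟩
        rw [δ1, show i + 1 + 1 = i + 2 from rfl, δ2]
        exact ⟨hc, by linarith [hx.2]⟩
    · obtain rfl : i = m+1 := by omega
      refine ⟨m+1, ⟨le_rfl, hi⟩, ?_⟩
      rw [δ1, show m + 1 + 1 = m + 2 from rfl, δ2]
      exact ⟨by linarith [hx.1], by rw [← hγn]; exact hx.2⟩

end VerifiableDisclosure
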